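/- There is a constant K ∈ ℝ such that for every state X the minimum in-tree resistance satisfies ρ(X) = K − φ(X); equivalently, for all states X and Y one has ρ(X) − ρ(Y) = φ(Y) − φ(X), and min_X ρ(X) = K − max_X φ(X). -/

import Mathlib

/-- The potential function φ(S) = G(S) - Σ_{b∈S} γ_b. -/
noncomputable def phi {B : ℕ} (G : Finset (Fin B) → ℝ) (γ : Fin B → ℝ)
    (S : Finset (Fin B)) : ℝ :=
  G S - ∑ b ∈ S, γ b

/-- An ordered pair (S,T) of states is an admissible transition if it is upward
(S ⊊ T) or downward (T = S \ {b₀} for some b₀ ∈ S). -/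
def Adm {B : ℕ} (S T : Finset (Fin B)) : Prop :=
  S ⊂ T ∨ ∃ b₀ ∈ S, T = S.erase b₀

/-- Resistance of an admissible transition. -/
noncomputable def res {B : ℕ} (G : Finset (Fin B) → ℝ) (γ : Fin B → ℝ)
    (S T : Finset (Fin B)) : ℝ :=
  if S ⊂ T then ∑ b ∈ T \ S, γ b else G S - G T

/-- An admissible in-tree rooted at X. -/
def IsInTree {B : ℕ} (X : Finset (Fin B))
    (t : Finset (Fin B) → Finset (Fin B)) : Prop :=
  ∀ S : Finset (Fin B), S ≠ X → Adm S (t S) ∧ ∃ n : ℕ, t^[n] S = X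

/-- The resistance of an in-tree rooted at X: Σ_{S ≠ X} r(S, t(S)). -/
noncomputable def treeRes {B : ℕ} (G : Finset (Fin B) → ℝ) (γ : Fin B → ℝ)
    (X : Finset (Fin B)) (t : Finset (Fin B) → Finset (Fin B)) : ℝ :=
  ∑ S ∈ Finset.univ.filter (· ≠ X), res G γ S (t S)

/-- ρ(X): the minimum resistance over all admissible in-trees rooted at X. -/
noncomputable def minRes {B : ℕ} (G : Finset (Fin B) → ℝ) (γ : Fin B → ℝ)
    (X : Finset (Fin B)) : ℝ :=
  sInf {w : ℝ | ∃ t, IsInTree X t ∧ w = treeRes G γ X t}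


open Relation in
lemma aux_bind {V : Type*} {r q : V → V → Prop} (h : ∀ a b, r a b → EqvGen q a b) {a b : V}
    (hab : EqvGen r a b) : EqvGen q a b := by
  induction hab with
  | rel a b h' => exact h a b h'
  | refl a => exact EqvGen.refl a
  | symm a b _ h => exact h.symm
  | trans a b d _ _ h1 h2 => exact h1.trans _ _ _ h2

open Relation in
lemma aux_mono {V : Type*} {r q : V → V → Prop} (h : ∀ a b, r a b → q a b) {a b : V}
    (hab : EqvGen r a b) : EqvGen q a b :=
  aux_bind (fun a b h' => EqvGen.rel _ _ (h a b h')) hab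

open Relation in
lemma aux_exch {V : Type*} [DecidableEq V] (c : Sym2 V → ℝ) (hc : ∀ e, 0 ≤ c e)
    (ES : Set (Sym2 V))
    (hpath : ∀ S T, EqvGen (fun a b => s(a,b) ∈ ES ∧ c s(a,b) ≤ c s(S,T)) S T) :
    ∀ n : ℕ, ∀ F : Finset (Sym2 V), Set.ncard {e | e ∈ F ∧ e ∉ ES} = n →
      (∀ a b, EqvGen (fun a b => s(a,b) ∈ F) a b) →
      ∃ F' : Finset (Sym2 V), (∀ a b, EqvGen (fun a b => s(a,b) ∈ F') a b) ∧
        (∀ e ∈ F', e ∈ ES) ∧ ∑ e ∈ F', c e ≤ ∑ e ∈ F, c e := by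
  intro n
  induction n with
  | zero =>
    intro F hF hconn
    refine ⟨F, hconn, ?_, le_rfl⟩
    have hfin : {e | e ∈ F ∧ e ∉ ES}.Finite := F.finite_toSet.subset (fun e he => he.1)
    rw [Set.ncard_eq_zero hfin] at hF
    intro e he
    by_contra h
    have : e ∈ {e | e ∈ F ∧ e ∉ ES} := ⟨he, h⟩
    rw [hF] at this
    exact this
  | succ n ih =>
    intro F hF hconn
    have hne : {e | e ∈ F ∧ e ∉ ES}.Nonempty := by
      apply Set.nonempty_of_ncard_ne_zero
      omega
    obtain ⟨e, heF, heE⟩ := hne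
    have hfin : {e | e ∈ F ∧ e ∉ ES}.Finite := F.finite_toSet.subset (fun e he => he.1)
    have hcard : Set.ncard {e' | e' ∈ F.erase e ∧ e' ∉ ES} = n := by
      have : {e' | e' ∈ F.erase e ∧ e' ∉ ES} = {e | e ∈ F ∧ e ∉ ES} \ {e} := by
        ext x; simp; tauto
      rw [this, Set.ncard_diff_singleton_of_mem (show e ∈ {e | e ∈ F ∧ e ∉ ES} from ⟨heF, heE⟩), hF]
      rfl
    have hsum := Finset.add_sum_erase F c heF
    induction e using Sym2.ind with
    | _ S T =>
    have hlift : ∀ F'' : Finset (Sym2 V), F.erase s(S,T) ⊆ F'' →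
        EqvGen (fun a b => s(a,b) ∈ F'') S T → ∀ a b, EqvGen (fun a b => s(a,b) ∈ F'') a b := by
      intro F'' hsub hST a b
      induction hconn a b with
      | rel a b h =>
        by_cases hab : s(a,b) = s(S,T)
        · rcases Sym2.eq_iff.1 hab with ⟨rfl, rfl⟩ | ⟨rfl, rfl⟩
          · exact hST
          · exact hST.symm
        · exact EqvGen.rel _ _ (hsub (Finset.mem_erase.2 ⟨hab, h⟩))
      | refl a => exact EqvGen.refl a
      | symm a b _ h => exact h.symm
      | trans a b d _ _ h1 h2 => exact h1.trans _ _ _ h2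
    by_cases hall : ∀ U W, s(U,W) ∈ ES → c s(U,W) ≤ c s(S,T) →
        EqvGen (fun a b => s(a,b) ∈ F.erase s(S,T)) U W
    · have hST : EqvGen (fun a b => s(a,b) ∈ F.erase s(S,T)) S T := by
        exact aux_bind (fun a b h => hall a b h.1 h.2) (hpath S T)
      obtain ⟨F', h1, h2, h3⟩ := ih (F.erase s(S,T)) hcard (hlift _ (Finset.Subset.refl _) hST)
      exact ⟨F', h1, h2, by linarith [hc s(S,T)]⟩
    · push Not at hall
      obtain ⟨U, W, hUE, hUc, hUW⟩ := hall
      have hD : ∀ a, EqvGen (fun a b => s(a,b) ∈ F.erase s(S,T)) a S ∨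
          EqvGen (fun a b => s(a,b) ∈ F.erase s(S,T)) a T := by
        intro a
        have key : ∀ a b, EqvGen (fun a b => s(a,b) ∈ F) a b →
          ((EqvGen (fun a b => s(a,b) ∈ F.erase s(S,T)) a S ∨
          EqvGen (fun a b => s(a,b) ∈ F.erase s(S,T)) a T) ↔
          (EqvGen (fun a b => s(a,b) ∈ F.erase s(S,T)) b S ∨
          EqvGen (fun a b => s(a,b) ∈ F.erase s(S,T)) b T)) := by
          intro a b h
          induction h with
          | rel a b h =>
            by_cases hab : s(a,b) = s(S,T)
            · rcases Sym2.eq_iff.1 hab with ⟨rfl, rfl⟩ | ⟨rfl, rfl⟩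
              · exact ⟨fun _ => Or.inr (EqvGen.refl _), fun _ => Or.inl (EqvGen.refl _)⟩
              · exact ⟨fun _ => Or.inl (EqvGen.refl _), fun _ => Or.inr (EqvGen.refl _)⟩
            · have h' : EqvGen (fun a b => s(a,b) ∈ F.erase s(S,T)) a b :=
                EqvGen.rel _ _ (Finset.mem_erase.2 ⟨hab, h⟩)
              exact ⟨Or.imp (h'.symm.trans _ _ _) (h'.symm.trans _ _ _),
                Or.imp (h'.trans _ _ _) (h'.trans _ _ _)⟩
          | refl a => exact Iff.rfl
          | symm a b _ h => exact h.symm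
          | trans a b d _ _ h1 h2 => exact h1.trans h2
        exact (key a S (hconn a S)).2 (Or.inl (EqvGen.refl _))
      have hsub : F.erase s(S,T) ⊆ insert s(U,W) (F.erase s(S,T)) := Finset.subset_insert _ _
      have hm : ∀ a b, EqvGen (fun a b => s(a,b) ∈ F.erase s(S,T)) a b →
          EqvGen (fun a b => s(a,b) ∈ insert s(U,W) (F.erase s(S,T))) a b :=
        fun a b h => aux_mono (fun _ _ h => hsub h) h
      have hUW' : EqvGen (fun a b => s(a,b) ∈ insert s(U,W) (F.erase s(S,T))) U W :=
        EqvGen.rel _ _ (Finset.mem_insert_self _ _)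
      have hST : EqvGen (fun a b => s(a,b) ∈ insert s(U,W) (F.erase s(S,T))) S T := by
        rcases hD U with hU | hU <;> rcases hD W with hW | hW
        · exact absurd (hU.trans _ _ _ hW.symm) hUW
        · exact (hm _ _ hU).symm.trans _ _ _ (hUW'.trans _ _ _ (hm _ _ hW))
        · exact (hm _ _ hW).symm.trans _ _ _ (hUW'.symm.trans _ _ _ (hm _ _ hU))
        · exact absurd (hU.trans _ _ _ hW.symm) hUW
      have hcard' : Set.ncard {e' | e' ∈ insert s(U,W) (F.erase s(S,T)) ∧ e' ∉ ES} = n := by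
        rw [← hcard]
        congr 1
        ext x
        simp only [Finset.mem_insert, Set.mem_setOf_eq]
        constructor
        · rintro ⟨rfl | h, h'⟩
          · exact absurd hUE h'
          · exact ⟨h, h'⟩
        · rintro ⟨h, h'⟩
          exact ⟨Or.inr h, h'⟩
      obtain ⟨F', h1, h2, h3⟩ := ih _ hcard' (hlift _ hsub hST)
      refine ⟨F', h1, h2, h3.trans ?_⟩
      have : s(U,W) ∉ F.erase s(S,T) := fun h => hUW (EqvGen.rel _ _ h)
      rw [Finset.sum_insert this]
      linarith

open Relation in
lemma aux_tree {V : Type*} [DecidableEq V] [Fintype V] (c : Sym2 V → ℝ) (hc : ∀ e, 0 ≤ c e)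
    (F : Finset (Sym2 V)) (hconn : ∀ a b, EqvGen (fun a b => s(a,b) ∈ F) a b) (Y : V) :
    ∃ t : V → V, (∀ S, S ≠ Y → s(S, t S) ∈ F ∧ S ≠ t S ∧ ∃ n : ℕ, t^[n] S = Y) ∧
      ∑ S ∈ Finset.univ.filter (· ≠ Y), c s(S, t S) ≤ ∑ e ∈ F, c e := by
  set H := SimpleGraph.fromEdgeSet (F : Set (Sym2 V)) with hH
  have hreach : ∀ a b, H.Reachable a b := by
    intro a b
    induction hconn a b with
    | rel a b h =>
      by_cases hab : a = b
      · subst hab; exact SimpleGraph.Reachable.refl _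
      · apply SimpleGraph.Adj.reachable
        rw [hH, SimpleGraph.fromEdgeSet_adj]
        exact ⟨h, hab⟩
    | refl a => exact SimpleGraph.Reachable.refl _
    | symm a b _ h => exact h.symm
    | trans a b d _ _ h1 h2 => exact h1.trans h2
  have hstep : ∀ S, ∃ T, S ≠ Y → H.Adj S T ∧ H.dist T Y < H.dist S Y := by
    intro S
    by_cases hS : S = Y
    · exact ⟨S, fun h => absurd hS h⟩
    obtain ⟨p, hp⟩ := (hreach S Y).exists_walk_length_eq_dist
    cases p with
    | nil => exact absurd rfl hS
    | cons h q =>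
      refine ⟨_, fun _ => ⟨h, ?_⟩⟩
      have := SimpleGraph.dist_le q
      rw [SimpleGraph.Walk.length_cons] at hp
      omega
  choose t ht using hstep
  have hadj : ∀ S, S ≠ Y → s(S, t S) ∈ F ∧ S ≠ t S := by
    intro S hS
    have := (ht S hS).1
    rw [hH, SimpleGraph.fromEdgeSet_adj] at this
    exact ⟨this.1, this.2⟩
  refine ⟨t, ?_, ?_⟩
  · intro S hS
    refine ⟨(hadj S hS).1, (hadj S hS).2, ?_⟩
    have : ∀ k : ℕ, ∀ S, H.dist S Y < k → ∃ n : ℕ, t^[n] S = Y := by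
      intro k
      induction k with
      | zero => intro S h; omega
      | succ k ih =>
        intro S h
        by_cases hS : S = Y
        · exact ⟨0, hS⟩
        · obtain ⟨n, hn⟩ := ih (t S) (by have := (ht S hS).2; omega)
          exact ⟨n + 1, hn⟩
    exact this _ S (Nat.lt_succ_self _)
  · rw [← Finset.sum_image (f := c) (g := fun S => s(S, t S))]
    · apply Finset.sum_le_sum_of_subset_of_nonneg
      · intro e he
        simp only [Finset.mem_image, Finset.mem_filter, Finset.mem_univ, true_and] at he
        obtain ⟨S, hS, rfl⟩ := he
        exact (hadj S hS).1
      · intro e _ _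
        exact hc e
    · intro S hS T hT h
      simp only [Finset.coe_filter, Finset.mem_univ, true_and, Set.mem_setOf_eq] at hS hT
      rcases Sym2.eq_iff.1 h with h | h
      · exact h.1
      · have h1 := (ht S hS).2
        have h2 := (ht T hT).2
        rw [h.2] at h1
        rw [← h.1] at h2
        omega

noncomputable def auxC {B : ℕ} (G : Finset (Fin B) → ℝ) (γ : Fin B → ℝ) :
    Sym2 (Finset (Fin B)) → ℝ :=
  Sym2.lift ⟨fun S T => ∑ b ∈ S ∪ T, γ b - G (S ∩ T), fun S T => by
    simp only [Finset.union_comm S T, Finset.inter_comm S T]⟩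

lemma auxC_mk {B : ℕ} (G : Finset (Fin B) → ℝ) (γ : Fin B → ℝ) (S T : Finset (Fin B)) :
    auxC G γ s(S,T) = ∑ b ∈ S ∪ T, γ b - G (S ∩ T) := rfl

def auxE {B : ℕ} : Set (Sym2 (Finset (Fin B))) :=
  {e | ∃ (a : Finset (Fin B)) (x : Fin B), x ∉ a ∧ e = s(a, insert x a)}

lemma aux_res {B : ℕ} (G : Finset (Fin B) → ℝ) (γ : Fin B → ℝ) (S T : Finset (Fin B))
    (h : Adm S T) : res G γ S T = phi G γ S + auxC G γ s(S,T) := by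
  rw [auxC_mk]
  unfold res phi
  rcases h with h | ⟨b, hb, rfl⟩
  · rw [if_pos h, Finset.union_eq_right.2 h.1, Finset.inter_eq_left.2 h.1]
    have := Finset.sum_sdiff (f := γ) h.1
    linarith
  · have hs : S.erase b ⊆ S := Finset.erase_subset _ _
    rw [if_neg (fun h => h.2 hs), Finset.union_eq_left.2 hs, Finset.inter_eq_right.2 hs]
    ring

lemma aux_adm {B : ℕ} (S T : Finset (Fin B)) (h : s(S,T) ∈ auxE) : Adm S T := by
  obtain ⟨a, x, hx, h⟩ := h
  rcases Sym2.eq_iff.1 h with ⟨rfl, rfl⟩ | ⟨rfl, rfl⟩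
  · exact Or.inl (Finset.ssubset_insert hx)
  · exact Or.inr ⟨x, Finset.mem_insert_self _ _, (Finset.erase_insert hx).symm⟩

open Relation in
lemma aux_up {B : ℕ} (S D : Finset (Fin B)) :
    EqvGen (fun a b => (∃ x, x ∉ a ∧ b = insert x a) ∧ S ⊆ a ∧ b ⊆ S ∪ D) S (S ∪ D) := by
  induction D using Finset.induction_on with
  | empty => rw [Finset.union_empty]; exact EqvGen.refl _
  | insert x D hx ih =>
    have h1 : EqvGen (fun a b => (∃ x, x ∉ a ∧ b = insert x a) ∧ S ⊆ a ∧ b ⊆ S ∪ insert x D)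
        S (S ∪ D) := by
      refine aux_mono ?_ ih
      rintro a b ⟨h, h', h''⟩
      exact ⟨h, h', h''.trans (Finset.union_subset_union_right (Finset.subset_insert _ _))⟩
    refine h1.trans _ _ _ ?_
    by_cases hxS : x ∈ S ∪ D
    · rw [Finset.union_insert, Finset.insert_eq_of_mem hxS]; exact EqvGen.refl _
    · exact EqvGen.rel _ _ ⟨⟨x, hxS, Finset.union_insert _ _ _⟩, Finset.subset_union_left,
        Finset.Subset.refl _⟩

open Relation in
lemma aux_path {B : ℕ} (G : Finset (Fin B) → ℝ) (γ : Fin B → ℝ)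
    (hGmono : ∀ S T : Finset (Fin B), S ⊆ T → G S ≤ G T)
    (hγ : ∀ b, 0 < γ b) (S T : Finset (Fin B)) :
    EqvGen (fun a b => s(a,b) ∈ auxE ∧ auxC G γ s(a,b) ≤ auxC G γ s(S,T)) S T := by
  have key : ∀ a b : Finset (Fin B), (∃ x, x ∉ a ∧ b = insert x a) → S ∩ T ⊆ a → b ⊆ S ∪ T →
      s(a,b) ∈ auxE ∧ auxC G γ s(a,b) ≤ auxC G γ s(S,T) := by
    rintro a b ⟨x, hx, rfl⟩ h1 h2
    refine ⟨⟨a, x, hx, rfl⟩, ?_⟩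
    rw [auxC_mk, auxC_mk]
    have hs : a ⊆ insert x a := Finset.subset_insert _ _
    rw [Finset.union_eq_right.2 hs, Finset.inter_eq_left.2 hs]
    have := hGmono _ _ h1
    have := Finset.sum_le_sum_of_subset_of_nonneg (f := γ) h2 (fun i _ _ => (hγ i).le)
    linarith
  have h1 := aux_up S T
  have h2 := aux_up T S
  rw [Finset.union_comm T S] at h2
  refine EqvGen.trans _ (S ∪ T) _ (aux_mono ?_ h1) (EqvGen.symm _ _ (aux_mono ?_ h2))
  · rintro a b ⟨h, h', h''⟩
    exact key a b h (Finset.inter_subset_left.trans h') h''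
  · rintro a b ⟨h, h', h''⟩
    exact key a b h (Finset.inter_subset_right.trans h') h''

lemma aux_treeRes {B : ℕ} (G : Finset (Fin B) → ℝ) (γ : Fin B → ℝ) (X : Finset (Fin B))
    (t : Finset (Fin B) → Finset (Fin B)) (h : IsInTree X t) (M : ℝ) :
    treeRes G γ X t + phi G γ X = ∑ S, phi G γ S
      + ∑ S ∈ Finset.univ.filter (· ≠ X), (auxC G γ s(S, t S) + M)
      - ((Fintype.card (Finset (Fin B)) : ℝ) - 1) * M := by
  unfold treeRes
  have h1 : ∑ S ∈ Finset.univ.filter (· ≠ X), res G γ S (t S)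
      = ∑ S ∈ Finset.univ.filter (· ≠ X), (phi G γ S + auxC G γ s(S, t S)) := by
    apply Finset.sum_congr rfl
    intro S hS
    exact aux_res G γ S _ (h S (Finset.mem_filter.1 hS).2).1
  rw [h1, Finset.filter_ne', Finset.sum_add_distrib, Finset.sum_add_distrib, Finset.sum_const,
    Finset.card_erase_of_mem (Finset.mem_univ X), Finset.card_univ, nsmul_eq_mul,
    Nat.cast_sub Fintype.card_pos, ← Finset.add_sum_erase _ _ (Finset.mem_univ X)]
  push_cast
  ring

open Relation in
lemma aux_conn {B : ℕ} (X : Finset (Fin B))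
    (t : Finset (Fin B) → Finset (Fin B)) (h : IsInTree X t) (a b : Finset (Fin B)) :
    EqvGen (fun a b => s(a,b) ∈ (Finset.univ.filter (· ≠ X)).image (fun S => s(S, t S))) a b := by
  have : ∀ n : ℕ, ∀ S, t^[n] S = X → EqvGen (fun a b => s(a,b) ∈
      (Finset.univ.filter (· ≠ X)).image (fun S => s(S, t S))) S X := by
    intro n
    induction n with
    | zero => intro S h; cases h; exact EqvGen.refl _
    | succ n ih =>
      intro S h
      by_cases hS : S = X
      · subst hS; exact EqvGen.refl _
      · refine EqvGen.trans _ (t S) _ (EqvGen.rel _ _ ?_) (ih _ h)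
        exact Finset.mem_image.2 ⟨S, by simpa using hS, rfl⟩
  have h' : ∀ S, EqvGen (fun a b => s(a,b) ∈
      (Finset.univ.filter (· ≠ X)).image (fun S => s(S, t S))) S X := by
    intro S
    by_cases hS : S = X
    · subst hS; exact EqvGen.refl _
    · obtain ⟨n, hn⟩ := (h S hS).2
      exact this n S hn
  exact (h' a).trans _ _ _ (h' b).symm

lemma aux_main {B : ℕ} (G : Finset (Fin B) → ℝ) (γ : Fin B → ℝ)
    (hGmono : ∀ S T : Finset (Fin B), S ⊆ T → G S ≤ G T)
    (hγ : ∀ b, 0 < γ b) (X Y : Finset (Fin B)) (t : Finset (Fin B) → Finset (Fin B))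
    (h : IsInTree X t) : ∃ t', IsInTree Y t' ∧
      treeRes G γ Y t' + phi G γ Y ≤ treeRes G γ X t + phi G γ X := by
  obtain ⟨M, hM⟩ : ∃ M : ℝ, ∀ e, 0 ≤ auxC G γ e + M := by
    obtain ⟨e0, he0⟩ := Finite.exists_min (auxC G γ)
    exact ⟨- auxC G γ e0, fun e => by linarith [he0 e]⟩
  obtain ⟨F, h1, h2, h3⟩ := aux_exch (fun e => auxC G γ e + M) hM auxE
    (fun S T => by simpa using aux_path G γ hGmono hγ S T) _ _ rfl (aux_conn X t h)
  obtain ⟨t', h4, h5⟩ := aux_tree (fun e => auxC G γ e + M) hM F h1 Y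
  have h6 : IsInTree Y t' := fun S hS =>
    ⟨aux_adm _ _ (h2 _ (h4 S hS).1), (h4 S hS).2.2⟩
  refine ⟨t', h6, ?_⟩
  rw [aux_treeRes G γ X t h M, aux_treeRes G γ Y t' h6 M]
  have h7 : ∑ e ∈ (Finset.univ.filter (· ≠ X)).image (fun S => s(S, t S)), (auxC G γ e + M)
      ≤ ∑ S ∈ Finset.univ.filter (· ≠ X), (auxC G γ s(S, t S) + M) :=
    Finset.sum_image_le_of_nonneg (fun e _ => hM e)
  linarith

lemma aux_exists {B : ℕ} (Y : Finset (Fin B)) : ∃ t, IsInTree Y t := by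
  classical
  obtain ⟨t', h4, -⟩ := aux_tree (fun _ => 0) (fun _ => le_rfl)
    (Finset.univ.filter (fun e : Sym2 (Finset (Fin B)) => e ∈ auxE)) (fun a b => by
      refine aux_mono ?_ (aux_path (fun _ => 0) (fun _ => 1) (fun _ _ _ => le_rfl)
        (fun _ => one_pos) a b)
      rintro a b ⟨h, -⟩
      simpa using h) Y
  exact ⟨t', fun S hS => ⟨aux_adm _ _ (by simpa using (h4 S hS).1), (h4 S hS).2.2⟩⟩

lemma aux_le {B : ℕ} (G : Finset (Fin B) → ℝ) (γ : Fin B → ℝ)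
    (hGmono : ∀ S T : Finset (Fin B), S ⊆ T → G S ≤ G T)
    (hγ : ∀ b, 0 < γ b) (X Y : Finset (Fin B)) :
    minRes G γ Y + phi G γ Y ≤ minRes G γ X + phi G γ X := by
  have hb : BddBelow {w : ℝ | ∃ t, IsInTree Y t ∧ w = treeRes G γ Y t} := by
    apply Set.Finite.bddBelow
    apply (Set.finite_range (treeRes G γ Y)).subset
    rintro w ⟨t, -, rfl⟩
    exact ⟨t, rfl⟩
  have : minRes G γ Y + phi G γ Y - phi G γ X ≤ minRes G γ X := by
    apply le_csInf
    · obtain ⟨t, ht⟩ := aux_exists X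
      exact ⟨_, t, ht, rfl⟩
    · rintro w ⟨t, ht, rfl⟩
      obtain ⟨t', h1, h2⟩ := aux_main G γ hGmono hγ X Y t ht
      have : minRes G γ Y ≤ treeRes G γ Y t' := csInf_le hb ⟨t', h1, rfl⟩
      linarith
  linarith

/-- Combination of Lemma 4 with Lemma 5: there is a constant K with
ρ(X) = K − φ(X) for every state X; equivalently ρ(X) − ρ(Y) = φ(Y) − φ(X)
for all X, Y, and min_X ρ(X) = K − max_X φ(X). -/
theorem stmt11 {B : ℕ} (G : Finset (Fin B) → ℝ) (γ : Fin B → ℝ)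
    (hG0 : G ∅ = 0)
    (hGmono : ∀ S T : Finset (Fin B), S ⊆ T → G S ≤ G T)
    (hγ : ∀ b, 0 < γ b) :
    ∃ K : ℝ,
      (∀ X : Finset (Fin B), minRes G γ X = K - phi G γ X) ∧
      (∀ X Y : Finset (Fin B),
        minRes G γ X - minRes G γ Y = phi G γ Y - phi G γ X) ∧
      (⨅ X : Finset (Fin B), minRes G γ X) =
        K - ⨆ X : Finset (Fin B), phi G γ X := by
  have hle := aux_le G γ hGmono hγ
  have hK : ∀ X, minRes G γ X = (minRes G γ ∅ + phi G γ ∅) - phi G γ X := fun X => by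
    linarith [hle X ∅, hle ∅ X]
  refine ⟨minRes G γ ∅ + phi G γ ∅, hK, fun X Y => by linarith [hle X Y, hle Y X], ?_⟩
  obtain ⟨Z, hZ⟩ := Finite.exists_max (phi G γ)
  have h1 : ⨆ X, phi G γ X = phi G γ Z :=
    le_antisymm (ciSup_le hZ) (le_ciSup (Set.finite_range _).bddAbove Z)
  rw [h1, ← hK Z]
  apply le_antisymm (ciInf_le (Set.finite_range _).bddBelow Z)
  apply le_ciInf
  intro X
  linarith [hle X Z, hZ X]
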